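/- Every circular 3G matching market of size 4 (four women, four men, four dogs) admits a stable matching. -/

import Mathlib

/-!
Compose the favourite maps women → men → dogs → women into a map `k` from women to women. A
woman, man or dog with its favourite partner is in no blocking triple.

* If `k` takes different values at three different women, then these three women and their
  favourite men can all be given their favourites. The remaining woman and the remaining man are
  matched to each other, so nothing blocks (`solvable_of_three`).
* If `k` has a fixed point, a triple of mutual favourites can be matched and set aside, leaving a
  market of size three, to which the same ideas apply (`solvable_of_fixed`).
* Otherwise `k` has a two-cycle, that is, the favourites contain a six-cycle
  woman `0` → man `0` → dog `0` → woman `1` → man `1` → dog `1` → woman `0`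
  after relabelling. It can be cut into two triples in three ways, satisfying two of the three
  kinds of agents on the cycle. Such a matching extends to a stable one unless the agents `2` and
  `3` of each kind agree about the agents `2` and `3` of the next kind, so by symmetry they all
  prefer `2` to `3` (`SixCycle.solvable`). A stable matching is then exhibited according to the
  favourite of woman `2` among men `0`, `1` and `2`, where `0` and `1` are again symmetric, and to
  a few further comparisons (`SixCycle.solvable_of_agree`, `SixCycle.solvable_of_w2`).

Each exhibited matching is verified by running through the 64 triples: every candidate for a
blocking triple contradicts a known comparison of ranks.
-/

/-- A circular 3G matching market of size `N`: the women, the men and the dogs are each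
indexed by `Fin N`.  `wpref a` is woman `a`'s strict preference list on the men, given as
the bijection sending each position to the man in that position (position `0` = most
preferred); similarly `mpref b` is man `b`'s preference list on the dogs and `dpref c` is
dog `c`'s preference list on the women. -/
structure CircularMarket (N : ℕ) where
  wpref : Fin N → (Fin N ≃ Fin N)
  mpref : Fin N → (Fin N ≃ Fin N)
  dpref : Fin N → (Fin N ≃ Fin N)

namespace CircularMarket

variable {N : ℕ}

/-- Woman `a` strictly prefers man `b` to man `b'`. -/
def wPrefers (Mkt : CircularMarket N) (a b b' : Fin N) : Prop :=
  (Mkt.wpref a).symm b < (Mkt.wpref a).symm b'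

/-- Man `b` strictly prefers dog `c` to dog `c'`. -/
def mPrefers (Mkt : CircularMarket N) (b c c' : Fin N) : Prop :=
  (Mkt.mpref b).symm c < (Mkt.mpref b).symm c'

/-- Dog `c` strictly prefers woman `a` to woman `a'`. -/
def dPrefers (Mkt : CircularMarket N) (c a a' : Fin N) : Prop :=
  (Mkt.dpref c).symm a < (Mkt.dpref c).symm a'

/-- The favorite (most preferred) man of woman `a`. -/
def wFav (Mkt : CircularMarket N) (a : Fin N) : Fin N := Mkt.wpref a ⟨0, a.pos⟩

/-- The favorite dog of man `b`. -/
def mFav (Mkt : CircularMarket N) (b : Fin N) : Fin N := Mkt.mpref b ⟨0, b.pos⟩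

/-- The favorite woman of dog `c`. -/
def dFav (Mkt : CircularMarket N) (c : Fin N) : Fin N := Mkt.dpref c ⟨0, c.pos⟩

/-- A 3G matching is given by a pair of bijections: `σ` matching each woman to a man and
`τ` matching each man to a dog (so woman `a` is in the triple `(a, σ a, τ (σ a))`).
The triple `(a, b, c)` blocks the matching `(σ, τ)` if each of its members strictly
prefers its partner in the triple to its current partner in the matching. -/
def Blocks (Mkt : CircularMarket N) (σ τ : Equiv.Perm (Fin N)) (a b c : Fin N) : Prop :=
  Mkt.wPrefers a b (σ a) ∧ Mkt.mPrefers b c (τ b) ∧ Mkt.dPrefers c a (σ.symm (τ.symm c))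

/-- A matching is stable if no triple blocks it. -/
def IsStable (Mkt : CircularMarket N) (σ τ : Equiv.Perm (Fin N)) : Prop :=
  ∀ a b c : Fin N, ¬ Mkt.Blocks σ τ a b c

end CircularMarket

namespace CircularMarket

/-! ### Ranks, relabelling and partner functions -/

/-- The position of man `b` in the list of woman `a` (smaller is better). -/
def wr (M : CircularMarket 4) (a b : Fin 4) : ℕ := (M.wpref a).symm b

/-- The position of dog `c` in the list of man `b`. -/
def mr (M : CircularMarket 4) (b c : Fin 4) : ℕ := (M.mpref b).symm c

/-- The position of woman `a` in the list of dog `c`. -/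
def dr (M : CircularMarket 4) (c a : Fin 4) : ℕ := (M.dpref c).symm a

/-- The market admits a stable matching. -/
def Solvable (M : CircularMarket 4) : Prop := ∃ σ τ : Equiv.Perm (Fin 4), M.IsStable σ τ

variable {M : CircularMarket 4}

lemma wr_ne (a : Fin 4) {b b' : Fin 4} (h : b ≠ b') : M.wr a b ≠ M.wr a b' :=
  fun e => h ((M.wpref a).symm.injective (Fin.ext e))

lemma mr_ne (b : Fin 4) {c c' : Fin 4} (h : c ≠ c') : M.mr b c ≠ M.mr b c' :=
  fun e => h ((M.mpref b).symm.injective (Fin.ext e))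

lemma dr_ne (c : Fin 4) {a a' : Fin 4} (h : a ≠ a') : M.dr c a ≠ M.dr c a' :=
  fun e => h ((M.dpref c).symm.injective (Fin.ext e))

lemma wr_wFav (a b : Fin 4) : M.wr a (M.wFav a) ≤ M.wr a b := by
  simp [wr, wFav]

lemma mr_mFav (b c : Fin 4) : M.mr b (M.mFav b) ≤ M.mr b c := by
  simp [mr, mFav]

lemma dr_dFav (c a : Fin 4) : M.dr c (M.dFav c) ≤ M.dr c a := by
  simp [dr, dFav]

/-- The same market in which the new labels `a`, `b`, `c` stand for woman `α a`, man `β b`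
and dog `γ c`. -/
def relabel (M : CircularMarket 4) (α β γ : Equiv.Perm (Fin 4)) : CircularMarket 4 where
  wpref a := (M.wpref (α a)).trans β.symm
  mpref b := (M.mpref (β b)).trans γ.symm
  dpref c := (M.dpref (γ c)).trans α.symm

lemma wr_relabel (α β γ : Equiv.Perm (Fin 4)) (a b : Fin 4) :
    (M.relabel α β γ).wr a b = M.wr (α a) (β b) := rfl

lemma mr_relabel (α β γ : Equiv.Perm (Fin 4)) (b c : Fin 4) :
    (M.relabel α β γ).mr b c = M.mr (β b) (γ c) := rfl

lemma dr_relabel (α β γ : Equiv.Perm (Fin 4)) (c a : Fin 4) :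
    (M.relabel α β γ).dr c a = M.dr (γ c) (α a) := rfl

lemma Solvable.of_relabel {α β γ : Equiv.Perm (Fin 4)} (h : (M.relabel α β γ).Solvable) :
    M.Solvable := by
  obtain ⟨σ, τ, h⟩ := h
  refine ⟨(α.symm.trans σ).trans β, (β.symm.trans τ).trans γ, fun a b c hb => ?_⟩
  apply h (α.symm a) (β.symm b) (γ.symm c)
  simpa [Blocks, wPrefers, mPrefers, dPrefers, relabel] using hb

/-- A matching may be specified by three partner functions, from women to men, from men to
dogs and from dogs to women, whose composition is the identity. -/
lemma solvable_of_partners (s t u : Fin 4 → Fin 4) (hc : ∀ a, u (t (s a)) = a)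
    (hst : ∀ a b c, ¬ (M.wr a b < M.wr a (s a) ∧ M.mr b c < M.mr b (t b) ∧
      M.dr c a < M.dr c (u c))) : M.Solvable := by
  have hs : Function.Bijective s := Finite.injective_iff_bijective.1 fun x y hxy => by
    rw [← hc x, hxy, hc]
  have ht : Function.Bijective t := Finite.injective_iff_bijective.1 fun x y hxy => by
    obtain ⟨x, rfl⟩ := hs.2 x
    obtain ⟨y, rfl⟩ := hs.2 y
    rw [← hc x, hxy, hc]
  refine ⟨Equiv.ofBijective s hs, Equiv.ofBijective t ht, fun a b c ⟨h₁, h₂, h₃⟩ => ?_⟩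
  refine hst a b c ⟨h₁, h₂, ?_⟩
  obtain ⟨y, rfl⟩ := ht.2 c
  obtain ⟨x, rfl⟩ := hs.2 y
  have e : (Equiv.ofBijective s hs).symm ((Equiv.ofBijective t ht).symm (t (s x))) = x := by
    rw [Equiv.ofBijective_symm_apply_apply, Equiv.ofBijective_symm_apply_apply]
  rw [dPrefers, e] at h₃
  rw [hc]
  exact h₃

lemma forall_fin_four {P : Fin 4 → Prop} (h₀ : P 0) (h₁ : P 1) (h₂ : P 2) (h₃ : P 3) :
    ∀ a, P a := by
  intro a
  fin_cases a <;> assumption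

lemma exists_perm {x y z : Fin 4} (hxy : x ≠ y) (hxz : x ≠ z) (hyz : y ≠ z) :
    ∃ α : Equiv.Perm (Fin 4), α 0 = x ∧ α 1 = y ∧ α 2 = z := by
  obtain ⟨v, hv⟩ : ∃ v, Function.Injective ![x, y, z, v] := by
    revert x y z
    decide
  exact ⟨Equiv.ofBijective _ (Finite.injective_iff_bijective.1 hv), rfl, rfl, rfl⟩

lemma exists_perm_two {x y : Fin 4} (hxy : x ≠ y) :
    ∃ α : Equiv.Perm (Fin 4), α 0 = x ∧ α 1 = y := by
  obtain ⟨z, hxz, hyz⟩ : ∃ z, x ≠ z ∧ y ≠ z := by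
    revert x y
    decide
  obtain ⟨α, h₀, h₁, -⟩ := exists_perm hxy hxz hyz
  exact ⟨α, h₀, h₁⟩

/-! ### Cycles of favourites other than six-cycles -/

/-- Label `x`, `y`, `z`, their favourite men and the favourite dogs of these men by `0`, `1`, `2`.
Matching equal labels satisfies three women and three men; woman `3` and man `3` are already
together, so no triple blocks. -/
lemma solvable_of_three {x y z : Fin 4}
    (hk : [x, y, z].Nodup)
    (hk' : ([x, y, z].map fun a => M.dFav (M.mFav (M.wFav a))).Nodup) : M.Solvable := by
  have key : ∀ {p q : Fin 4}, M.dFav (M.mFav (M.wFav p)) ≠ M.dFav (M.mFav (M.wFav q)) →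
      M.wFav p ≠ M.wFav q ∧ M.mFav (M.wFav p) ≠ M.mFav (M.wFav q) := fun h =>
    ⟨fun e => h (by rw [e]), fun e => h (by rw [e])⟩
  simp only [List.map, List.nodup_cons, List.mem_cons, not_or, List.not_mem_nil,
    not_false_eq_true, List.nodup_nil, and_true] at hk hk'
  obtain ⟨⟨hxy, hxz⟩, hyz⟩ := hk
  obtain ⟨⟨kxy, kxz⟩, kyz⟩ := hk'
  obtain ⟨α, a0, a1, a2⟩ := exists_perm hxy hxz hyz
  obtain ⟨β, b0, b1, b2⟩ := exists_perm (key kxy).1 (key kxz).1 (key kyz).1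
  obtain ⟨γ, c0, c1, c2⟩ := exists_perm (key kxy).2 (key kxz).2 (key kyz).2
  refine Solvable.of_relabel (α := α) (β := β) (γ := γ)
    (solvable_of_partners id id id (fun _ => rfl) fun a b c ⟨h₁, h₂, _⟩ => ?_)
  simp only [wr_relabel, mr_relabel, id] at h₁ h₂
  have ha : a = 3 := by
    refine forall_fin_four (P := fun a => M.wr (α a) (β b) < M.wr (α a) (β a) → a = 3)
      ?_ ?_ ?_ (fun _ => rfl) a h₁ <;> intro h
    · exact absurd h (not_lt.2 (a0 ▸ b0 ▸ wr_wFav _ _))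
    · exact absurd h (not_lt.2 (a1 ▸ b1 ▸ wr_wFav _ _))
    · exact absurd h (not_lt.2 (a2 ▸ b2 ▸ wr_wFav _ _))
  have hb : b = 3 := by
    refine forall_fin_four (P := fun b => M.mr (β b) (γ c) < M.mr (β b) (γ b) → b = 3)
      ?_ ?_ ?_ (fun _ => rfl) b h₂ <;> intro h
    · exact absurd h (not_lt.2 (b0 ▸ c0 ▸ mr_mFav _ _))
    · exact absurd h (not_lt.2 (b1 ▸ c1 ▸ mr_mFav _ _))
    · exact absurd h (not_lt.2 (b2 ▸ c2 ▸ mr_mFav _ _))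
  subst ha hb
  exact lt_irrefl _ h₁

/-- Two nested triples of mutual favourites: once both are matched, woman `2` gets her better
remaining man and he gets his better remaining dog. -/
lemma solvable_of_nested
    (hw₀ : ∀ b, M.wr 0 0 ≤ M.wr 0 b) (hm₀ : ∀ c, M.mr 0 0 ≤ M.mr 0 c)
    (hd₀ : ∀ a, M.dr 0 0 ≤ M.dr 0 a)
    (hw₁ : ∀ b, b ≠ 0 → M.wr 1 1 ≤ M.wr 1 b) (hm₁ : ∀ c, c ≠ 0 → M.mr 1 1 ≤ M.mr 1 c)
    (hd₁ : ∀ a, a ≠ 0 → M.dr 1 1 ≤ M.dr 1 a) : M.Solvable := by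
  simp [Fin.forall_fin_succ] at hw₀ hm₀ hd₀ hw₁ hm₁ hd₁
  rcases le_total (M.wr 2 2) (M.wr 2 3) with h | h
  · rcases le_total (M.mr 2 2) (M.mr 2 3) with h' | h'
    · refine solvable_of_partners ![0, 1, 2, 3] ![0, 1, 2, 3] ![0, 1, 2, 3] (by decide) ?_
      refine forall_fin_four ?_ ?_ ?_ ?_ <;> refine forall_fin_four ?_ ?_ ?_ ?_ <;>
        refine forall_fin_four ?_ ?_ ?_ ?_ <;> simp only [Matrix.cons_val] <;> omega
    · refine solvable_of_partners ![0, 1, 2, 3] ![0, 1, 3, 2] ![0, 1, 3, 2] (by decide) ?_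
      refine forall_fin_four ?_ ?_ ?_ ?_ <;> refine forall_fin_four ?_ ?_ ?_ ?_ <;>
        refine forall_fin_four ?_ ?_ ?_ ?_ <;> simp only [Matrix.cons_val] <;> omega
  · rcases le_total (M.mr 3 2) (M.mr 3 3) with h' | h'
    · refine solvable_of_partners ![0, 1, 3, 2] ![0, 1, 3, 2] ![0, 1, 2, 3] (by decide) ?_
      refine forall_fin_four ?_ ?_ ?_ ?_ <;> refine forall_fin_four ?_ ?_ ?_ ?_ <;>
        refine forall_fin_four ?_ ?_ ?_ ?_ <;> simp only [Matrix.cons_val] <;> omega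
    · refine solvable_of_partners ![0, 1, 3, 2] ![0, 1, 2, 3] ![0, 1, 3, 2] (by decide) ?_
      refine forall_fin_four ?_ ?_ ?_ ?_ <;> refine forall_fin_four ?_ ?_ ?_ ?_ <;>
        refine forall_fin_four ?_ ?_ ?_ ?_ <;> simp only [Matrix.cons_val] <;> omega

lemma exists_min_ne_zero (r : Fin 4 → ℕ) : ∃ b, b ≠ 0 ∧ ∀ b', b' ≠ 0 → r b ≤ r b' := by
  obtain ⟨b, hb, h⟩ := Finset.exists_min_image (Finset.univ.erase (0 : Fin 4)) r ⟨1, by decide⟩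
  exact ⟨b, by simpa using hb, fun b' hb' => h b' (by simpa using hb')⟩

lemma exists_fixed_or_two : ∀ k : Fin 4 → Fin 4, (∀ x, k x ≠ 0) →
    (∃ x, x ≠ 0 ∧ k x = x) ∨ ∃ x y, 0 ≠ x ∧ 0 ≠ y ∧ x ≠ y ∧ k x ≠ k y := by
  decide +kernel

/-- If woman `0`, man `0` and dog `0` are mutual favourites, they can be matched and set aside.
In the remaining market of size three, the composed favourite map either has a fixed point,
giving another triple that can be set aside, or takes different values at two women; these two
women and their favourite men can then be served optimally at the same time. -/
lemma solvable_of_zero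
    (hw₀ : ∀ b, M.wr 0 0 ≤ M.wr 0 b) (hm₀ : ∀ c, M.mr 0 0 ≤ M.mr 0 c)
    (hd₀ : ∀ a, M.dr 0 0 ≤ M.dr 0 a) : M.Solvable := by
  choose f hf0 hf using fun a => exists_min_ne_zero (M.wr a)
  choose g hg0 hg using fun b => exists_min_ne_zero (M.mr b)
  choose h hh0 hh using fun c => exists_min_ne_zero (M.dr c)
  rcases exists_fixed_or_two (fun a => h (g (f a))) (fun _ => hh0 _) with
    ⟨x, hx, hk⟩ | ⟨x, y, hx, hy, hxy, hk⟩
  · obtain ⟨α, a0, a1⟩ := exists_perm_two hx.symm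
    obtain ⟨β, b0, b1⟩ := exists_perm_two (hf0 x).symm
    obtain ⟨γ, c0, c1⟩ := exists_perm_two (hg0 (f x)).symm
    have hα : ∀ i, i ≠ 0 → α i ≠ 0 := fun i hi e => hi (α.injective (e.trans a0.symm))
    have hβ : ∀ i, i ≠ 0 → β i ≠ 0 := fun i hi e => hi (β.injective (e.trans b0.symm))
    have hγ : ∀ i, i ≠ 0 → γ i ≠ 0 := fun i hi e => hi (γ.injective (e.trans c0.symm))
    refine Solvable.of_relabel (α := α) (β := β) (γ := γ)
      (solvable_of_nested ?_ ?_ ?_ ?_ ?_ ?_) <;>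
      simp only [wr_relabel, mr_relabel, dr_relabel, a0, a1, b0, b1, c0, c1]
    · exact fun b => hw₀ _
    · exact fun c => hm₀ _
    · exact fun a => hd₀ _
    · exact fun b hb => hf _ _ (hβ b hb)
    · exact fun c hc => hg _ _ (hγ c hc)
    · intro a ha
      have := hh (g (f x)) _ (hα a ha)
      rwa [hk] at this
  · have hf' : f x ≠ f y := fun e => hk (by simp only [e])
    have hg' : g (f x) ≠ g (f y) := fun e => hk (by simp only [e])
    obtain ⟨α, a0, a1, a2⟩ := exists_perm hx hy hxy
    obtain ⟨β, b0, b1, b2⟩ := exists_perm (hf0 x).symm (hf0 y).symm hf'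
    obtain ⟨γ, c0, c1, c2⟩ := exists_perm (hg0 (f x)).symm (hg0 (f y)).symm hg'
    have hβ : ∀ i, i ≠ 0 → β i ≠ 0 := fun i hi e => hi (β.injective (e.trans b0.symm))
    have hγ : ∀ i, i ≠ 0 → γ i ≠ 0 := fun i hi e => hi (γ.injective (e.trans c0.symm))
    apply Solvable.of_relabel (α := α) (β := β) (γ := γ)
    set N := M.relabel α β γ
    have w0 : ∀ b, N.wr 0 0 ≤ N.wr 0 b := fun b => by
      simp only [N, wr_relabel, a0, b0]; exact hw₀ _
    have m0 : ∀ c, N.mr 0 0 ≤ N.mr 0 c := fun c => by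
      simp only [N, mr_relabel, b0, c0]; exact hm₀ _
    have d0 : ∀ a, N.dr 0 0 ≤ N.dr 0 a := fun a => by
      simp only [N, dr_relabel, c0, a0]; exact hd₀ _
    have w1 : ∀ b, b ≠ 0 → N.wr 1 1 ≤ N.wr 1 b := fun b hb => by
      simp only [N, wr_relabel, a1, b1]; exact hf _ _ (hβ b hb)
    have w2 : ∀ b, b ≠ 0 → N.wr 2 2 ≤ N.wr 2 b := fun b hb => by
      simp only [N, wr_relabel, a2, b2]; exact hf _ _ (hβ b hb)
    have m1 : ∀ c, c ≠ 0 → N.mr 1 1 ≤ N.mr 1 c := fun c hc => by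
      simp only [N, mr_relabel, b1, c1]; exact hg _ _ (hγ c hc)
    have m2 : ∀ c, c ≠ 0 → N.mr 2 2 ≤ N.mr 2 c := fun c hc => by
      simp only [N, mr_relabel, b2, c2]; exact hg _ _ (hγ c hc)
    clear_value N
    simp [Fin.forall_fin_succ] at w0 m0 d0 w1 w2 m1 m2
    refine solvable_of_partners ![0, 1, 2, 3] ![0, 1, 2, 3] ![0, 1, 2, 3] (by decide) ?_
    refine forall_fin_four ?_ ?_ ?_ ?_ <;> refine forall_fin_four ?_ ?_ ?_ ?_ <;>
      refine forall_fin_four ?_ ?_ ?_ ?_ <;> simp only [Matrix.cons_val] <;> omega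

lemma solvable_of_fixed {x : Fin 4} (hx : M.dFav (M.mFav (M.wFav x)) = x) : M.Solvable := by
  refine Solvable.of_relabel (α := Equiv.swap 0 x) (β := Equiv.swap 0 (M.wFav x))
    (γ := Equiv.swap 0 (M.mFav (M.wFav x))) (solvable_of_zero ?_ ?_ ?_) <;>
    simp only [wr_relabel, mr_relabel, dr_relabel, Equiv.swap_apply_left]
  · exact fun b => wr_wFav _ _
  · exact fun c => mr_mFav _ _
  · intro a
    have := dr_dFav (M := M) (M.mFav (M.wFav x)) (Equiv.swap 0 x a)
    rwa [hx] at this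

/-! ### Six-cycles of favourites -/

/-- Woman `i`, man `i` (for `i = 0, 1`) have man `i`, dog `i` as favourites, dog `0` has
woman `1` and dog `1` has woman `0`: the six-cycle
woman `0` → man `0` → dog `0` → woman `1` → man `1` → dog `1` → woman `0`. -/
structure SixCycle (M : CircularMarket 4) : Prop where
  w0 : ∀ b, M.wr 0 0 ≤ M.wr 0 b
  w1 : ∀ b, M.wr 1 1 ≤ M.wr 1 b
  m0 : ∀ c, M.mr 0 0 ≤ M.mr 0 c
  m1 : ∀ c, M.mr 1 1 ≤ M.mr 1 c
  d0 : ∀ a, M.dr 0 1 ≤ M.dr 0 a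
  d1 : ∀ a, M.dr 1 0 ≤ M.dr 1 a

/-- Women `2` and `3` both prefer man `2` to man `3`. -/
def WAgree (M : CircularMarket 4) : Prop := M.wr 2 2 < M.wr 2 3 ∧ M.wr 3 2 < M.wr 3 3

/-- Men `2` and `3` both prefer dog `2` to dog `3`. -/
def MAgree (M : CircularMarket 4) : Prop := M.mr 2 2 < M.mr 2 3 ∧ M.mr 3 2 < M.mr 3 3

/-- Dogs `2` and `3` both prefer woman `2` to woman `3`. -/
def DAgree (M : CircularMarket 4) : Prop := M.dr 2 2 < M.dr 2 3 ∧ M.dr 3 2 < M.dr 3 3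

/-- The case in which woman `2` prefers man `0` to men `1` and `2`. -/
lemma SixCycle.solvable_of_w2 (h : M.SixCycle) (hw : M.WAgree) (hm : M.MAgree) (hd : M.DAgree)
    (h₁ : M.wr 2 0 ≤ M.wr 2 1) (h₂ : M.wr 2 0 ≤ M.wr 2 2) : M.Solvable := by
  obtain ⟨w0, w1, m0, m1, d0, d1⟩ := h
  simp [Fin.forall_fin_succ] at w0 w1 m0 m1 d0 d1
  obtain ⟨hw2, hw3⟩ := hw
  obtain ⟨hm2, hm3⟩ := hm
  obtain ⟨hd2, hd3⟩ := hd
  -- The cases follow the second choice of woman `0`, the preference of man `0` between dogs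
  -- `2` and `3`, and that of woman `1` between men `2` and `3`.
  have second : (M.wr 0 1 ≤ M.wr 0 2 ∧ M.wr 0 1 ≤ M.wr 0 3) ∨
      (M.wr 0 2 ≤ M.wr 0 1 ∧ M.wr 0 2 ≤ M.wr 0 3) ∨
      (M.wr 0 3 ≤ M.wr 0 1 ∧ M.wr 0 3 ≤ M.wr 0 2) := by omega
  rcases second with h0 | h0 | h0
  · rcases le_total (M.wr 1 2) (M.wr 1 3) with h3 | h3
    · rcases le_total (M.mr 0 2) (M.mr 0 3) with h4 | h4
      · refine solvable_of_partners ![1, 2, 0, 3] ![2, 1, 0, 3] ![1, 0, 2, 3] (by decide) ?_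
        refine forall_fin_four ?_ ?_ ?_ ?_ <;> refine forall_fin_four ?_ ?_ ?_ ?_ <;>
          refine forall_fin_four ?_ ?_ ?_ ?_ <;> simp only [Matrix.cons_val] <;> omega
      · refine solvable_of_partners ![1, 2, 0, 3] ![3, 1, 0, 2] ![1, 0, 3, 2] (by decide) ?_
        refine forall_fin_four ?_ ?_ ?_ ?_ <;> refine forall_fin_four ?_ ?_ ?_ ?_ <;>
          refine forall_fin_four ?_ ?_ ?_ ?_ <;> simp only [Matrix.cons_val] <;> omega
    · refine solvable_of_partners ![1, 3, 0, 2] ![0, 1, 2, 3] ![2, 0, 3, 1] (by decide) ?_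
      refine forall_fin_four ?_ ?_ ?_ ?_ <;> refine forall_fin_four ?_ ?_ ?_ ?_ <;>
        refine forall_fin_four ?_ ?_ ?_ ?_ <;> simp only [Matrix.cons_val] <;> omega
  · rcases le_total (M.mr 0 2) (M.mr 0 3) with h4 | h4
    · refine solvable_of_partners ![2, 1, 0, 3] ![2, 0, 1, 3] ![1, 0, 2, 3] (by decide) ?_
      refine forall_fin_four ?_ ?_ ?_ ?_ <;> refine forall_fin_four ?_ ?_ ?_ ?_ <;>
        refine forall_fin_four ?_ ?_ ?_ ?_ <;> simp only [Matrix.cons_val] <;> omega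
    · refine solvable_of_partners ![2, 1, 0, 3] ![3, 0, 1, 2] ![1, 0, 3, 2] (by decide) ?_
      refine forall_fin_four ?_ ?_ ?_ ?_ <;> refine forall_fin_four ?_ ?_ ?_ ?_ <;>
        refine forall_fin_four ?_ ?_ ?_ ?_ <;> simp only [Matrix.cons_val] <;> omega
  · refine solvable_of_partners ![3, 1, 0, 2] ![0, 1, 2, 3] ![2, 1, 3, 0] (by decide) ?_
    refine forall_fin_four ?_ ?_ ?_ ?_ <;> refine forall_fin_four ?_ ?_ ?_ ?_ <;>
      refine forall_fin_four ?_ ?_ ?_ ?_ <;> simp only [Matrix.cons_val] <;> omega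

lemma SixCycle.solvable_of_agree (h : M.SixCycle) (hw : M.WAgree) (hm : M.MAgree)
    (hd : M.DAgree) : M.Solvable := by
  have best : (M.wr 2 0 ≤ M.wr 2 1 ∧ M.wr 2 0 ≤ M.wr 2 2) ∨
      (M.wr 2 1 ≤ M.wr 2 0 ∧ M.wr 2 1 ≤ M.wr 2 2) ∨
      (M.wr 2 2 ≤ M.wr 2 0 ∧ M.wr 2 2 ≤ M.wr 2 1) := by omega
  rcases best with h0 | h0 | h0
  · exact h.solvable_of_w2 hw hm hd h0.1 h0.2
  -- The hypotheses are invariant under exchanging the labels `0` and `1`.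
  · exact Solvable.of_relabel (α := Equiv.swap 0 1) (β := Equiv.swap 0 1) (γ := Equiv.swap 0 1)
      (SixCycle.solvable_of_w2 ⟨fun _ => h.w1 _, fun _ => h.w0 _, fun _ => h.m1 _,
        fun _ => h.m0 _, fun _ => h.d1 _, fun _ => h.d0 _⟩ hw hm hd h0.1 h0.2)
  · obtain ⟨w0, w1, m0, m1, d0, d1⟩ := h
    simp [Fin.forall_fin_succ] at w0 w1 m0 m1 d0 d1
    obtain ⟨hw2, hw3⟩ := hw
    obtain ⟨hm2, hm3⟩ := hm
    obtain ⟨hd2, hd3⟩ := hd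
    refine solvable_of_partners ![0, 1, 2, 3] ![1, 0, 2, 3] ![1, 0, 2, 3] (by decide) ?_
    refine forall_fin_four ?_ ?_ ?_ ?_ <;> refine forall_fin_four ?_ ?_ ?_ ?_ <;>
      refine forall_fin_four ?_ ?_ ?_ ?_ <;> simp only [Matrix.cons_val] <;> omega

/-- If a six-cycle is matched so that its women and men are satisfied, only women and men with
labels `2` and `3` can block; if women `2` and `3` disagree about men `2` and `3`, they are
satisfied as well. The same applies to the other two pairs of kinds. If they agree on `3`, the
labels `2` and `3` of the preferred kind are exchanged, which keeps the other hypotheses. -/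
lemma SixCycle.solvable (h : M.SixCycle) : M.Solvable := by
  have dogs : ∀ {M : CircularMarket 4}, M.SixCycle → M.WAgree → M.MAgree → M.Solvable := by
    intro M h hw hm
    have n2 := dr_ne (M := M) 2 (show (2 : Fin 4) ≠ 3 by decide)
    have n3 := dr_ne (M := M) 3 (show (2 : Fin 4) ≠ 3 by decide)
    rcases lt_or_gt_of_ne n2 with h2 | h2 <;> rcases lt_or_gt_of_ne n3 with h3 | h3
    · exact h.solvable_of_agree hw hm ⟨h2, h3⟩
    · obtain ⟨w0, w1, m0, m1, d0, d1⟩ := h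
      simp [Fin.forall_fin_succ] at w0 w1 m0 m1 d0 d1
      refine solvable_of_partners ![0, 1, 2, 3] ![1, 0, 2, 3] ![1, 0, 2, 3] (by decide) ?_
      refine forall_fin_four ?_ ?_ ?_ ?_ <;> refine forall_fin_four ?_ ?_ ?_ ?_ <;>
        refine forall_fin_four ?_ ?_ ?_ ?_ <;> simp only [Matrix.cons_val] <;> omega
    · obtain ⟨w0, w1, m0, m1, d0, d1⟩ := h
      simp [Fin.forall_fin_succ] at w0 w1 m0 m1 d0 d1
      refine solvable_of_partners ![0, 1, 2, 3] ![1, 0, 3, 2] ![1, 0, 3, 2] (by decide) ?_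
      refine forall_fin_four ?_ ?_ ?_ ?_ <;> refine forall_fin_four ?_ ?_ ?_ ?_ <;>
        refine forall_fin_four ?_ ?_ ?_ ?_ <;> simp only [Matrix.cons_val] <;> omega
    · exact Solvable.of_relabel (α := Equiv.swap 2 3) (β := 1) (γ := 1)
        (SixCycle.solvable_of_agree ⟨fun _ => h.w0 _, fun _ => h.w1 _, fun _ => h.m0 _, fun _ => h.m1 _,
          fun _ => h.d0 _, fun _ => h.d1 _⟩
          ⟨hw.2, hw.1⟩ hm ⟨h2, h3⟩)
  have men : ∀ {M : CircularMarket 4}, M.SixCycle → M.WAgree → M.Solvable := by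
    intro M h hw
    have n2 := mr_ne (M := M) 2 (show (2 : Fin 4) ≠ 3 by decide)
    have n3 := mr_ne (M := M) 3 (show (2 : Fin 4) ≠ 3 by decide)
    rcases lt_or_gt_of_ne n2 with h2 | h2 <;> rcases lt_or_gt_of_ne n3 with h3 | h3
    · exact dogs h hw ⟨h2, h3⟩
    · obtain ⟨w0, w1, m0, m1, d0, d1⟩ := h
      simp [Fin.forall_fin_succ] at w0 w1 m0 m1 d0 d1
      refine solvable_of_partners ![1, 0, 2, 3] ![0, 1, 2, 3] ![1, 0, 2, 3] (by decide) ?_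
      refine forall_fin_four ?_ ?_ ?_ ?_ <;> refine forall_fin_four ?_ ?_ ?_ ?_ <;>
        refine forall_fin_four ?_ ?_ ?_ ?_ <;> simp only [Matrix.cons_val] <;> omega
    · obtain ⟨w0, w1, m0, m1, d0, d1⟩ := h
      simp [Fin.forall_fin_succ] at w0 w1 m0 m1 d0 d1
      refine solvable_of_partners ![1, 0, 2, 3] ![0, 1, 3, 2] ![1, 0, 3, 2] (by decide) ?_
      refine forall_fin_four ?_ ?_ ?_ ?_ <;> refine forall_fin_four ?_ ?_ ?_ ?_ <;>
        refine forall_fin_four ?_ ?_ ?_ ?_ <;> simp only [Matrix.cons_val] <;> omega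
    · exact Solvable.of_relabel (α := 1) (β := 1) (γ := Equiv.swap 2 3)
        (dogs ⟨fun _ => h.w0 _, fun _ => h.w1 _, fun _ => h.m0 _, fun _ => h.m1 _,
          fun _ => h.d0 _, fun _ => h.d1 _⟩ hw ⟨h2, h3⟩)
  have n2 := wr_ne (M := M) 2 (show (2 : Fin 4) ≠ 3 by decide)
  have n3 := wr_ne (M := M) 3 (show (2 : Fin 4) ≠ 3 by decide)
  rcases lt_or_gt_of_ne n2 with h2 | h2 <;> rcases lt_or_gt_of_ne n3 with h3 | h3
  · exact men h ⟨h2, h3⟩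
  · obtain ⟨w0, w1, m0, m1, d0, d1⟩ := h
    simp [Fin.forall_fin_succ] at w0 w1 m0 m1 d0 d1
    refine solvable_of_partners ![0, 1, 2, 3] ![0, 1, 2, 3] ![0, 1, 2, 3] (by decide) ?_
    refine forall_fin_four ?_ ?_ ?_ ?_ <;> refine forall_fin_four ?_ ?_ ?_ ?_ <;>
      refine forall_fin_four ?_ ?_ ?_ ?_ <;> simp only [Matrix.cons_val] <;> omega
  · obtain ⟨w0, w1, m0, m1, d0, d1⟩ := h
    simp [Fin.forall_fin_succ] at w0 w1 m0 m1 d0 d1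
    refine solvable_of_partners ![0, 1, 3, 2] ![0, 1, 2, 3] ![0, 1, 3, 2] (by decide) ?_
    refine forall_fin_four ?_ ?_ ?_ ?_ <;> refine forall_fin_four ?_ ?_ ?_ ?_ <;>
      refine forall_fin_four ?_ ?_ ?_ ?_ <;> simp only [Matrix.cons_val] <;> omega
  · exact Solvable.of_relabel (α := 1) (β := Equiv.swap 2 3) (γ := 1)
      (men ⟨fun _ => h.w0 _, fun _ => h.w1 _, fun _ => h.m0 _, fun _ => h.m1 _,
        fun _ => h.d0 _, fun _ => h.d1 _⟩ ⟨h2, h3⟩)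

lemma solvable_of_two {x : Fin 4} (hx : M.dFav (M.mFav (M.wFav x)) ≠ x)
    (hx' : M.dFav (M.mFav (M.wFav (M.dFav (M.mFav (M.wFav x))))) = x) : M.Solvable := by
  generalize hy : M.dFav (M.mFav (M.wFav x)) = y at hx hx'
  have hw : M.wFav x ≠ M.wFav y := fun e => hx (by rw [← hx', ← e, hy])
  have hm : M.mFav (M.wFav x) ≠ M.mFav (M.wFav y) := fun e => hx (by rw [← hx', ← e, hy])
  obtain ⟨α, a0, a1⟩ := exists_perm_two hx.symm
  obtain ⟨β, b0, b1⟩ := exists_perm_two hw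
  obtain ⟨γ, c0, c1⟩ := exists_perm_two hm
  refine Solvable.of_relabel (α := α) (β := β) (γ := γ) (SixCycle.solvable ⟨?_, ?_, ?_, ?_, ?_, ?_⟩)
    <;> simp only [wr_relabel, mr_relabel, dr_relabel, a0, a1, b0, b1, c0, c1]
  · exact fun b => wr_wFav _ _
  · exact fun b => wr_wFav _ _
  · exact fun c => mr_mFav _ _
  · exact fun c => mr_mFav _ _
  · exact fun a => hy ▸ dr_dFav _ _
  · intro a
    have := dr_dFav (M := M) (M.mFav (M.wFav y)) (α a)
    rwa [hx'] at this

lemma fixed_or_two_or_three : ∀ k : Fin 4 → Fin 4,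
    (∃ x, k x = x) ∨ (∃ x, k x ≠ x ∧ k (k x) = x) ∨
      ∃ x y z, [x, y, z].Nodup ∧ ([x, y, z].map k).Nodup := by
  decide +kernel

end CircularMarket

/-- Every circular 3G matching market of size 4 admits a stable matching. -/
theorem circular_3GSM_size_four_has_stable_matching (Mkt : CircularMarket 4) :
    ∃ σ τ : Equiv.Perm (Fin 4), Mkt.IsStable σ τ := by
  rcases CircularMarket.fixed_or_two_or_three (fun a => Mkt.dFav (Mkt.mFav (Mkt.wFav a))) with
    ⟨x, hx⟩ | ⟨x, hx, hx'⟩ | ⟨x, y, z, h, h'⟩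
  · exact CircularMarket.solvable_of_fixed hx
  · exact CircularMarket.solvable_of_two hx hx'
  · exact CircularMarket.solvable_of_three h h'
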